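/- In the symbolic message algebra, let o, r, cid, η, rel, k, w, u, m be pairwise distinct natural numbers and let S₁ := {atom o, atom r, atom cid, atom η, atom rel, senc (atom w) (atom k), senc (atom k) (atom m)} (the requester's view: the public operation descriptor, freshness token, credential identifier, salt, the authorized release form, and the public components of the persistent sealed state). Then atom k ∉ analz S₁, atom w ∉ analz S₁, atom u ∉ analz S₁, and atom m ∉ analz S₁. -/

import Mathlib

/-! The requester's view is its own analysis: it contains no pair, signature or asymmetric
ciphertext, and the key of each of its two symmetric ciphertexts is absent from it. Hence
`analz` adds nothing (`analz_subset_self`), and none of the four secret atoms is an element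
of the view, by distinctness. -/

/-- Symbolic message algebra (Dolev–Yao model). -/
inductive Msg where
  | atom : ℕ → Msg
  | pair : Msg → Msg → Msg
  | senc : Msg → Msg → Msg
  | aenc : ℕ → Msg → Msg
  | sig : Msg → Msg → Msg
deriving DecidableEq

/-- `Analz S m`: message `m` is extractable from the set `S` by projection,
symmetric decryption with a known key, asymmetric decryption with a known
private key, or reading the message out of a signature. -/
inductive Analz (S : Set Msg) : Msg → Prop
  | mem {m : Msg} : m ∈ S → Analz S m
  | fst {a b : Msg} : Analz S (Msg.pair a b) → Analz S a
  | snd {a b : Msg} : Analz S (Msg.pair a b) → Analz S b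
  | sdec {k m : Msg} : Analz S (Msg.senc k m) → Analz S k → Analz S m
  | adec {i : ℕ} {m : Msg} : Analz S (Msg.aenc i m) → Analz S (Msg.atom i) → Analz S m
  | sigMsg {k m : Msg} : Analz S (Msg.sig k m) → Analz S m

/-- `analz S` is the least superset of `S` closed under the analysis rules. -/
def analz (S : Set Msg) : Set Msg := {m | Analz S m}

/-- A set already closed under the analysis rules gains nothing under `analz`. -/
lemma analz_subset_self {S : Set Msg}
    (hpair : ∀ a b, Msg.pair a b ∈ S → a ∈ S ∧ b ∈ S)
    (hsenc : ∀ k m, Msg.senc k m ∈ S → k ∈ S → m ∈ S)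
    (haenc : ∀ i m, Msg.aenc i m ∈ S → Msg.atom i ∈ S → m ∈ S)
    (hsig : ∀ k m, Msg.sig k m ∈ S → m ∈ S) : analz S ⊆ S := by
  intro x hx
  induction hx with
  | mem h => exact h
  | fst _ ih => exact (hpair _ _ ih).1
  | snd _ ih => exact (hpair _ _ ih).2
  | sdec _ _ ih₁ ih₂ => exact hsenc _ _ ih₁ ih₂
  | adec _ _ ih₁ ih₂ => exact haenc _ _ ih₁ ih₂
  | sigMsg _ ih => exact hsig _ _ ih

/-- Requester non-exposure (CRC, symbolic core): the requester's view — public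
proposal material `o, r, cid, η`, the authorized release form `rel`, and the
public components of the sealed state — reveals neither the state key `k`, the
wrapping key `w`, the derivation intermediate `u`, nor the protected plaintext `m`. -/
theorem requester_non_exposure
    (o r cid η rel k w u m : ℕ)
    (hdist : List.Pairwise (· ≠ ·) [o, r, cid, η, rel, k, w, u, m]) :
    let S₁ : Set Msg :=
      {Msg.atom o, Msg.atom r, Msg.atom cid, Msg.atom η, Msg.atom rel,
       Msg.senc (Msg.atom w) (Msg.atom k), Msg.senc (Msg.atom k) (Msg.atom m)}
    Msg.atom k ∉ analz S₁ ∧ Msg.atom w ∉ analz S₁ ∧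
      Msg.atom u ∉ analz S₁ ∧ Msg.atom m ∉ analz S₁ := by
  intro S₁
  simp only [List.pairwise_cons, List.mem_cons, forall_eq_or_imp] at hdist
  -- The only compound messages in the view are two ciphertexts, whose keys
  -- `atom w` and `atom k` are not in the view, so no analysis rule applies.
  have hsub : analz S₁ ⊆ S₁ := by
    apply analz_subset_self
    · simp [S₁]
    · rintro a b hab ha
      simp only [S₁, Set.mem_insert_iff, Set.mem_singleton_iff, reduceCtorEq, false_or,
        Msg.senc.injEq] at hab
      rcases hab with ⟨rfl, rfl⟩ | ⟨rfl, rfl⟩ <;> simp [S₁] at ha <;> grind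
    · simp [S₁]
    · simp [S₁]
  refine ⟨fun h => ?_, fun h => ?_, fun h => ?_, fun h => ?_⟩ <;>
    have h' := hsub h <;> simp [S₁] at h' <;> grind
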